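/- arXiv:2604.10294 — 2 statements merged into one kernel-verified Lean document; each statement's English description precedes it below -/
import Mathlib

section
/- Let $i \ge 2$ be an integer and let $t$ be any integer with $5t \equiv 1 \pmod{L_i}$. Then $(-1)^i L_{i-2} L_{i+1} t \equiv 1 \pmod{L_i}$; that is, $(-1)^{i+1} L_{i-2} t$ is the negative of an inverse of $L_{i+1}$ modulo $L_i$, so that $L_{i+1} \cdot (-1)^{i+1} L_{i-2} t \equiv -1 \pmod{L_i}$. -/
/-!
Write `i = n + 2`, `a = L_n`, `b = L_{n+1}`, so that `L_i = a + b` and `L_{i+1} = a + 2 * b`.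
The Cassini-type identity `a ^ 2 + a * b - b ^ 2 = 5 * (-1) ^ n` gives
`L_{i-2} * L_{i+1} = a * (a + 2 * b) = 5 * (-1) ^ n + b * (a + b)`, hence
`(-1) ^ i * L_{i-2} * L_{i+1} ≡ 5` modulo `L_i`; multiplying by `t` gives both congruences.
-/

/-- The Lucas numbers: `L_0 = 2`, `L_1 = 1`, `L_{n+2} = L_{n+1} + L_n`. -/
def lucas : ℕ → ℕ
  | 0 => 2
  | 1 => 1
  | n + 2 => lucas (n + 1) + lucas n

/-- Cassini's identity for Lucas numbers, with `L_{n+2}` expanded as `L_{n+1} + L_n`. -/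
theorem lucas_cassini (n : ℕ) :
    (lucas n : ℤ) ^ 2 + lucas n * lucas (n + 1) - (lucas (n + 1) : ℤ) ^ 2 = 5 * (-1) ^ n := by
  induction n with
  | zero => norm_num [lucas]
  | succ n ih =>
    have h : lucas (n + 1 + 1) = lucas (n + 1) + lucas n := by rw [lucas]
    rw [h, pow_succ]
    push_cast
    linear_combination -ih

/-- For `i ≥ 2` and any integer `t` with `5*t ≡ 1 (mod L_i)`,
`(-1)^i * L_{i-2} * L_{i+1} * t ≡ 1 (mod L_i)`; that is, `(-1)^(i+1) * L_{i-2} * t` is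
the negative of an inverse of `L_{i+1}` modulo `L_i`, i.e.
`L_{i+1} * ((-1)^(i+1) * L_{i-2} * t) ≡ -1 (mod L_i)`. -/
theorem lucas_inverse_mod' (i : ℕ) (hi : 2 ≤ i) (t : ℤ)
    (ht : 5 * t ≡ 1 [ZMOD (lucas i : ℤ)]) :
    ((-1 : ℤ) ^ i * lucas (i - 2) * lucas (i + 1) * t ≡ 1 [ZMOD (lucas i : ℤ)]) ∧
    ((lucas (i + 1) : ℤ) * ((-1 : ℤ) ^ (i + 1) * lucas (i - 2) * t)
      ≡ -1 [ZMOD (lucas i : ℤ)]) := by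
  obtain ⟨n, rfl⟩ : ∃ n, i = n + 2 := ⟨i - 2, by omega⟩
  have h2 : lucas (n + 2) = lucas (n + 1) + lucas n := by rw [lucas]
  have h3 : lucas (n + 2 + 1) = lucas (n + 2) + lucas (n + 1) := by rw [lucas]
  have hc := lucas_cassini n
  have hs : ((-1 : ℤ) ^ n) ^ 2 = 1 := by rw [← pow_mul, mul_comm, pow_mul]; norm_num
  have key : (-1 : ℤ) ^ (n + 2) * lucas (n + 2 - 2) * lucas (n + 2 + 1) * t ≡ 1
      [ZMOD (lucas (n + 2) : ℤ)] := by
    obtain ⟨k, hk⟩ := ht.symm.dvd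
    refine (Int.modEq_iff_dvd.mpr ⟨k + (-1) ^ n * lucas (n + 1) * t, ?_⟩).symm
    rw [Nat.add_sub_cancel, h3]
    rw [h2] at hk ⊢
    push_cast at hk ⊢
    rw [pow_add]
    linear_combination hk + (-1) ^ n * t * hc + 5 * t * hs
  refine ⟨key, ?_⟩
  convert key.neg using 1
  ring
end

section
/- Let $i \ge 3$ and $n \ge 1$ be integers. With $B'_1$ the unique integer satisfying $B'_1 \equiv (-1)^i n F_{i-2} \pmod{F_i}$, $1 \le B'_1 \le F_i$; $C'_2$ the unique integer satisfying $C'_2 \equiv (-1)^i n F_i \pmod{F_{i+1}}$, $1 \le C'_2 \le F_{i+1}$; $A'_3$ the unique integer satisfying $A'_3 \equiv (-1)^i n F_{i+1} \pmod{F_{i+2}}$, $1 \le A'_3 \le F_{i+2}$; and $N_2 = n(n+F_i+F_{i+1}+F_{i+2}) + F_{i+2}F_{i+1}B'_1(F_i+1-(B'_1-1)) + F_iF_{i+2}C'_2(F_{i+1}+1-(C'_2-1)) + F_{i+1}F_iA'_3(F_{i+2}+1-(F_{i+2}-1)(A'_3-1))$, the integer $2 F_i F_{i+1} F_{i+2}$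 divides $N_2$. -/
/-!
Write `a = F_i`, `b = F_{i+1}`, `c = F_{i+2} = a + b` and `e = (-1)^i`. Everything follows from
Cassini's identity `b² - ab - a² = e` together with `e² = 1`.

Modulo `a`, Cassini gives `b² ≡ bc ≡ e`, and `F_{i-2} = 2a - b ≡ -b`, so `b B'_1 ≡ -n` and the terms
of `N_2` that survive cancel: `n(n + 2b) + b² B'_1 (2 - B'_1) ≡ 0`. The same computation works
modulo `b` and modulo `c`. As `a`, `b`, `c` are pairwise coprime, `abc ∣ N_2`.

For the extra factor `2`, note that exactly one of `a`, `b`, `c` is even, and it is enough that `N_2`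
is divisible by twice that one. The lemmas `dvd_part_a`, `dvd_part_b`, `dvd_part_c` therefore
exhibit the quotient of `N_2` by `a`, `b`, `c` explicitly, so that its parity can be read off.
-/

/-- Cassini's identity, in the form `F_{k+1}² - F_k F_{k+1} - F_k² = (-1)^k`. -/
lemma cassini (k : ℕ) :
    (Nat.fib (k + 1) : ℤ) ^ 2 - Nat.fib k * Nat.fib (k + 1) - (Nat.fib k : ℤ) ^ 2 = (-1) ^ k := by
  induction k with
  | zero => simp
  | succ k ih =>
    rw [Nat.fib_add_two (n := k), pow_succ (-1 : ℤ), ← ih]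
    push_cast
    ring

/-- The number `N_2` as a polynomial in `a = F_i`, `b = F_{i+1}`, with `F_{i+2} = a + b`. -/
def N2poly (a b n B C A : ℤ) : ℤ :=
  n * (n + a + b + (a + b)) + (a + b) * b * B * (a + 1 - (B - 1))
    + a * (a + b) * C * (b + 1 - (C - 1))
    + b * a * A * ((a + b) + 1 - ((a + b) - 1) * (A - 1))

/-- `a ∣ N_2`, and `2a ∣ N_2` when `a` is even. -/
lemma dvd_part_a {a b e n B C A : ℤ} (he : e ^ 2 = 1) (h : b ^ 2 - a * b - a ^ 2 = e)
    (hB : a ∣ B + e * n * b) :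
    a ∣ N2poly a b n B C A ∧ (Even a → 2 * a ∣ N2poly a b n B C A) := by
  obtain ⟨k, hk⟩ := hB
  have hBdef : B = k * a - e * n * b := by linear_combination hk
  have key : N2poly a b n B C A = a * ((2 * n + (a + 2 * b) * B * (a + 2 - B) + e * B + 2 * e * k
      - e * n ^ 2 * (a + b) + 2 * n * b * k - e * k ^ 2 * a)
      + ((a + b) * C * (b + 1 - (C - 1))
      + b * A * ((a + b) + 1 - ((a + b) - 1) * (A - 1)))) := by
    rw [N2poly, hBdef, ← h]
    rw [← h] at he
    grind
  refine ⟨⟨_, key⟩, fun ha => ?_⟩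
  rw [key, mul_comm 2 a]
  refine mul_dvd_mul_left a (even_iff_two_dvd.mp ?_)
  have he' : ¬ Even e := by
    intro h2
    have : Even (e ^ 2) := h2.pow_of_ne_zero two_ne_zero
    simp [he] at this
  have hb' : ¬ Even b := by
    intro h2
    refine he' ?_
    rw [← h]
    simp [parity_simps, ha, h2]
  -- Modulo `2` the quotient reduces to `B + n`, and `B ≡ n` since `e` and `b` are odd.
  simp only [hBdef, parity_simps, ha, he', hb']
  by_cases Even k <;> by_cases Even n <;> by_cases Even A <;> by_cases Even C <;> simp [*]

/-- `b ∣ N_2`, and `2b ∣ N_2` when `b` is even. -/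
lemma dvd_part_b {a b e n B C A : ℤ} (he : e ^ 2 = 1) (h : b ^ 2 - a * b - a ^ 2 = e)
    (hC : b ∣ C - e * n * a) :
    b ∣ N2poly a b n B C A ∧ (Even b → 2 * b ∣ N2poly a b n B C A) := by
  obtain ⟨k, hk⟩ := hC
  have hCdef : C = e * n * a + k * b := by linear_combination hk
  have key : N2poly a b n B C A = b * ((2 * n + b * C * (b + 2 - C) - e * C - 2 * e * k
      + e * n ^ 2 * (b - a) + 2 * n * a * k + e * k ^ 2 * b)
      + ((a + b) * B * (a + 1 - (B - 1))
      + a * A * ((a + b) + 1 - ((a + b) - 1) * (A - 1)))) := by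
    rw [N2poly, hCdef, ← h]
    rw [← h] at he
    grind
  refine ⟨⟨_, key⟩, fun hb => ?_⟩
  rw [key, mul_comm 2 b]
  refine mul_dvd_mul_left b (even_iff_two_dvd.mp ?_)
  have he' : ¬ Even e := by
    intro h2
    have : Even (e ^ 2) := h2.pow_of_ne_zero two_ne_zero
    simp [he] at this
  have ha' : ¬ Even a := by
    intro h2
    refine he' ?_
    rw [← h]
    simp [parity_simps, hb, h2]
  -- Modulo `2` the quotient reduces to `C + n`, and `C ≡ n` since `e` and `a` are odd.
  simp only [hCdef, parity_simps, hb, he', ha']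
  by_cases Even k <;> by_cases Even n <;> by_cases Even A <;> by_cases Even B <;> simp [*]

/-- `c ∣ N_2`, and `2c ∣ N_2` when `c` is even, where `c = a + b`. -/
lemma dvd_part_c {a b e n B C A : ℤ} (he : e ^ 2 = 1) (h : b ^ 2 - a * b - a ^ 2 = e)
    (hA : a + b ∣ A - e * n * b) :
    a + b ∣ N2poly a b n B C A ∧ (Even (a + b) → 2 * (a + b) ∣ N2poly a b n B C A) := by
  obtain ⟨k, hk⟩ := hA
  have hAdef : A = e * n * b + k * (a + b) := by linear_combination hk
  have key : N2poly a b n B C A = (a + b) * ((2 * n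
      + (b - a) * A * (2 * (a + b) - (a + b) * A + A) - 2 * e * A + e * A ^ 2
      - (e * n ^ 2 * a + 2 * n * b * k + e * k ^ 2 * (a + b)))
      + (b * B * (a + 1 - (B - 1)) + a * C * (b + 1 - (C - 1)))) := by
    rw [N2poly, hAdef, ← h]
    rw [← h] at he
    grind
  refine ⟨⟨_, key⟩, fun hc => ?_⟩
  rw [key, mul_comm 2 (a + b)]
  refine mul_dvd_mul_left (a + b) (even_iff_two_dvd.mp ?_)
  have he' : ¬ Even e := by
    intro h2
    have : Even (e ^ 2) := h2.pow_of_ne_zero two_ne_zero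
    simp [he] at this
  have hab : Even a ↔ Even b := Int.even_add.mp hc
  have hb' : ¬ Even b := by
    intro h2
    refine he' ?_
    rw [← h]
    simp [parity_simps, hab, h2]
  -- Modulo `2` the quotient reduces to `A + n`, and `A ≡ n` since `e` and `b` are odd.
  simp only [hAdef, parity_simps, hab, he', hb']
  by_cases Even k <;> by_cases Even n <;> by_cases Even B <;> by_cases Even C <;> simp [*]

/-- The three divisibilities combine because `a`, `b`, `a + b` are pairwise coprime, and one of them
is even. -/
lemma dvd_N2poly {a b e n B C A : ℤ} (he : e ^ 2 = 1) (h : b ^ 2 - a * b - a ^ 2 = e)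
    (hB : a ∣ B + e * n * b) (hC : b ∣ C - e * n * a) (hA : a + b ∣ A - e * n * b) :
    2 * a * b * (a + b) ∣ N2poly a b n B C A := by
  obtain ⟨ha, ha2⟩ := dvd_part_a (C := C) (A := A) he h hB
  obtain ⟨hb, hb2⟩ := dvd_part_b (B := B) (A := A) he h hC
  obtain ⟨hc, hc2⟩ := dvd_part_c (B := B) (C := C) he h hA
  have cab : IsCoprime a b := ⟨-(e * a), e * (b - a), by linear_combination e * h + he⟩
  have cac : IsCoprime a (a + b) := by simpa [add_comm] using cab.add_mul_left_right 1
  have cbc : IsCoprime b (a + b) := by simpa using cab.symm.add_mul_left_right 1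
  -- Doubling an even number preserves its coprimality to any other number.
  have dbl : ∀ {x y : ℤ}, Even x → IsCoprime x y → IsCoprime (2 * x) y := fun hx hxy =>
    (hxy.of_isCoprime_of_dvd_left (even_iff_two_dvd.mp hx)).mul_left hxy
  rcases Int.even_or_odd a with ea | oa
  · exact ((dbl ea cac).mul_left cbc).mul_dvd ((dbl ea cab).mul_dvd (ha2 ea) hb) hc
  rcases Int.even_or_odd b with eb | ob
  · have := ((dbl eb cbc).mul_left cac).mul_dvd ((dbl eb cab.symm).mul_dvd (hb2 eb) ha) hc
    rwa [show 2 * b * a * (a + b) = 2 * a * b * (a + b) by ring] at this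
  · have ec : Even (a + b) := oa.add_odd ob
    have := ((dbl ec cbc.symm).mul_left cab).mul_dvd ((dbl ec cac.symm).mul_dvd (hc2 ec) ha) hb
    rwa [show 2 * (a + b) * a * b = 2 * a * b * (a + b) by ring] at this

/-- With the notation of the Fibonacci triplet theorem, `2*F_i*F_{i+1}*F_{i+2}`
divides `N_2`. -/
theorem fib_N2_divisibility
    (i n : ℕ) (hi : 3 ≤ i) (hn : 1 ≤ n)
    (B1 C2 A3 : ℕ)
    (hB1 : (B1 : ℤ) ≡ (-1) ^ i * n * Nat.fib (i - 2) [ZMOD (Nat.fib i : ℤ)])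
    (hB1r : 1 ≤ B1 ∧ B1 ≤ Nat.fib i)
    (hC2 : (C2 : ℤ) ≡ (-1) ^ i * n * Nat.fib i [ZMOD (Nat.fib (i + 1) : ℤ)])
    (hC2r : 1 ≤ C2 ∧ C2 ≤ Nat.fib (i + 1))
    (hA3 : (A3 : ℤ) ≡ (-1) ^ i * n * Nat.fib (i + 1) [ZMOD (Nat.fib (i + 2) : ℤ)])
    (hA3r : 1 ≤ A3 ∧ A3 ≤ Nat.fib (i + 2))
    (N2 : ℤ)
    (hN2 : N2 = (n : ℤ) * ((n : ℤ) + Nat.fib i + Nat.fib (i + 1) + Nat.fib (i + 2))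
        + (Nat.fib (i + 2) : ℤ) * Nat.fib (i + 1) * B1
            * ((Nat.fib i : ℤ) + 1 - ((B1 : ℤ) - 1))
        + (Nat.fib i : ℤ) * Nat.fib (i + 2) * C2
            * ((Nat.fib (i + 1) : ℤ) + 1 - ((C2 : ℤ) - 1))
        + (Nat.fib (i + 1) : ℤ) * Nat.fib i * A3
            * ((Nat.fib (i + 2) : ℤ) + 1 - ((Nat.fib (i + 2) : ℤ) - 1) * ((A3 : ℤ) - 1))) :
    (2 * (Nat.fib i : ℤ) * Nat.fib (i + 1) * Nat.fib (i + 2)) ∣ N2 := by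
  obtain ⟨j, rfl⟩ : ∃ j, i = j + 2 := ⟨i - 2, by omega⟩
  have hcas := cassini (j + 2)
  have he : ((-1 : ℤ) ^ (j + 2)) ^ 2 = 1 := by rw [← pow_mul, mul_comm, pow_mul]; simp
  -- `F_{i-2} = 2 F_i - F_{i+1}`
  have hj : (Nat.fib j : ℤ) = 2 * Nat.fib (j + 2) - Nat.fib (j + 2 + 1) := by
    have h1 : Nat.fib (j + 2) = Nat.fib j + Nat.fib (j + 1) := Nat.fib_add_two
    have h2 : Nat.fib (j + 2 + 1) = Nat.fib (j + 1) + Nat.fib (j + 2) := Nat.fib_add_two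
    omega
  have hc : (Nat.fib (j + 2 + 2) : ℤ) = Nat.fib (j + 2) + Nat.fib (j + 2 + 1) := by
    exact_mod_cast (Nat.fib_add_two : Nat.fib (j + 2 + 2) = _)
  rw [Nat.add_sub_cancel, hj] at hB1
  rw [hc] at hA3 hN2 ⊢
  generalize (Nat.fib (j + 2) : ℤ) = a at *
  generalize (Nat.fib (j + 2 + 1) : ℤ) = b at *
  generalize ((-1 : ℤ) ^ (j + 2)) = e at *
  subst hN2
  refine dvd_N2poly he (by linear_combination hcas) ?_ hC2.symm.dvd hA3.symm.dvd
  obtain ⟨k, hk⟩ := hB1.symm.dvd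
  exact ⟨k + 2 * e * n, by linear_combination hk⟩
end
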